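/- The words 00 and 11 each have frequency √5/10 in the sequence T: the limit as x → ∞ of (1/x)·#{N < x : T(N) = 0 and T(N+1) = 0} equals √5/10, and the limit as x → ∞ of (1/x)·#{N < x : T(N) = 1 and T(N+1) = 1} equals √5/10. -/

import Mathlib

/-- The golden mean φ = (1+√5)/2. -/
noncomputable def phi : ℝ := (1 + Real.sqrt 5) / 2

/-- `d : ℤ → ℕ` is a base-phi expansion of `N`: finitely supported, digits at most 1,
no two consecutive digits equal 1, and `∑ d i * φ^i = N`. -/
def IsBasePhi (N : ℕ) (d : ℤ → ℕ) : Prop :=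
  {i : ℤ | d i ≠ 0}.Finite ∧ (∀ i, d i ≤ 1) ∧ (∀ i, d i * d (i + 1) = 0) ∧
    ∑' i : ℤ, (d i : ℝ) * phi ^ i = (N : ℝ)

/-- The Lucas numbers: L 0 = 2, L 1 = 1, L (n+2) = L (n+1) + L n. -/
def Lucas : ℕ → ℕ
  | 0 => 2
  | 1 => 1
  | n + 2 => Lucas (n + 1) + Lucas n

/-- The sum of the digits of a (finitely supported) digit function. -/
noncomputable def digitSum (d : ℤ → ℕ) : ℕ := ∑' i : ℤ, d i

/-!
Write the sequence `T` as the signs `(-1) ^ T N` and cut it at the Lucas numbers. Adding two digits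
1 to every expansion in a block keeps its word of signs and adding one digit negates it, so the
blocks `P n = headWord n` and `B n = gapWord n` satisfy `P (n + 1) = P n ++ B n ++ P n` and
`B (n + 2) = -B (n + 1) ++ P n ++ -B (n + 1)`. Hence a nearly additive functional that grows on
these words like `r ^ n` with `r < φ ^ 2` is `o(x)` on the prefix of length `x`. This applies to
the sum of the letters. It also applies to the sum of the products of consecutive letters, once its
mean `2 * √5 / 5 - 1` is removed: the contributions of the two junctions in each recursion cancel.
The frequency of `η η` is then the mean of `(1 + η * a) * (1 + η * b) / 4` over consecutive letters
`a`, `b`, namely `(1 + (2 * √5 / 5 - 1)) / 4 = √5 / 10`.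
-/

namespace BasePhi

open Asymptotics Filter
open scoped goldenRatio Topology

mutual

/-- The signs `(-1) ^ T N` for `0 ≤ N ≤ L (2 * n + 1)`, where `L` are the Lucas numbers. -/
def headWord : ℕ → List ℤˣ
  | 0 => [1, -1]
  | n + 1 => headWord n ++ gapWord n ++ headWord n

/-- The signs `(-1) ^ T N` for `L (2 * n + 1) < N < L (2 * n + 2)`, where `L` are the Lucas
numbers. -/
def gapWord : ℕ → List ℤˣ
  | 0 => [1]
  | 1 => [-1, -1]
  | n + 2 => (gapWord (n + 1)).map Neg.neg ++ headWord n ++ (gapWord (n + 1)).map Neg.neg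

end

mutual

lemma length_headWord : ∀ n : ℕ,
    ((headWord n).length : ℝ) = φ ^ (2 * n + 1) + ψ ^ (2 * n + 1) + 1
  | 0 => by norm_num [headWord, Real.goldenRatio_add_goldenConj]
  | n + 1 => by
    simp only [headWord, List.length_append, Nat.cast_add, length_headWord n, length_gapWord n]
    linear_combination (-φ ^ (2 * n) * (φ + 1)) * Real.goldenRatio_sq -
      ψ ^ (2 * n) * (ψ + 1) * Real.goldenConj_sq

lemma length_gapWord : ∀ n : ℕ,
    ((gapWord n).length : ℝ) = φ ^ (2 * n) + ψ ^ (2 * n) - 1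
  | 0 => by norm_num [gapWord]
  | 1 => by
    simp only [gapWord, List.length_cons, List.length_nil]
    push_cast
    linear_combination -Real.goldenRatio_sq - Real.goldenConj_sq - Real.goldenRatio_add_goldenConj
  | n + 2 => by
    simp only [gapWord, List.length_append, List.length_map, Nat.cast_add, length_headWord n,
      length_gapWord (n + 1)]
    linear_combination (-φ ^ (2 * n) * (φ ^ 2 + φ)) * Real.goldenRatio_sq -
      ψ ^ (2 * n) * (ψ ^ 2 + ψ) * Real.goldenConj_sq

end

lemma abs_goldenConj_pow_le_one (n : ℕ) : |ψ ^ n| ≤ 1 := by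
  rw [abs_pow]
  exact pow_le_one₀ (abs_nonneg _)
    (abs_le.2 ⟨Real.neg_one_lt_goldenConj.le, Real.goldenConj_neg.le.trans zero_le_one⟩)

lemma goldenRatio_sq_pow_le_length_headWord (n : ℕ) : (φ ^ 2) ^ n ≤ (headWord n).length := by
  have hψ := abs_le.1 (abs_goldenConj_pow_le_one (2 * n + 1))
  have hφ : φ ^ (2 * n) ≤ φ ^ (2 * n + 1) :=
    pow_le_pow_right₀ Real.one_lt_goldenRatio.le (Nat.le_succ _)
  rw [length_headWord, ← pow_mul]
  linarith

section Expansions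

/-- `x` has a base-phi expansion with digits in positions `a, …, b` only, and `s` is the sign
`(-1) ^ k` for the number `k` of its digits 1. -/
def HasExpansion (a b : ℤ) (x : ℝ) (s : ℤˣ) : Prop :=
  ∃ S : Finset ℤ, (∀ i ∈ S, i + 1 ∉ S) ∧ (∀ i ∈ S, a ≤ i ∧ i ≤ b) ∧
    ∑ i ∈ S, φ ^ i = x ∧ (-1) ^ S.card = s

variable {a b a' b' j : ℤ} {x y : ℝ} {s : ℤˣ} {u v w : List ℤˣ}

lemma HasExpansion.insert (h : HasExpansion a b x s) (hj : b + 1 < j ∨ j + 1 < a) :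
    HasExpansion (min a j) (max b j) (x + φ ^ j) (-s) := by
  obtain ⟨S, hsparse, hwin, rfl, rfl⟩ := h
  have hjS : j ∉ S := fun hm => by grind
  refine ⟨insert j S, ?_, ?_, ?_, ?_⟩
  · grind
  · grind
  · rw [Finset.sum_insert hjS, add_comm]
  · rw [Finset.card_insert_of_notMem hjS, pow_succ, mul_neg_one]

lemma HasExpansion.exists_isBasePhi {N : ℕ} (h : HasExpansion a b N s) :
    ∃ d, IsBasePhi N d ∧ (-1) ^ digitSum d = s := by
  obtain ⟨S, hsparse, -, hval, rfl⟩ := h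
  refine ⟨fun i => if i ∈ S then 1 else 0, ⟨?_, ?_, ?_, ?_⟩, ?_⟩
  · exact S.finite_toSet.subset fun i hi => by simpa using hi
  · grind
  · grind
  · rw [tsum_eq_sum (s := S) (by simp +contextual), ← hval]
    exact Finset.sum_congr rfl fun i hi => by simp [hi, phi]
  · rw [digitSum, tsum_eq_sum (s := S) (by simp +contextual)]
    simp

/-- The numbers `x, x + 1, x + 2, …` have expansions with digits in positions `a, …, b` only,
and the letters of `w` are the signs of these expansions. -/
def Spells (a b : ℤ) (x : ℝ) (w : List ℤˣ) : Prop :=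
  ∀ k (hk : k < w.length), HasExpansion a b (x + k) w[k]

lemma Spells.weaken (h : Spells a b x w) (hxy : x = y) (ha : a' ≤ a) (hb : b ≤ b') :
    Spells a' b' y w := fun k hk => by
  obtain ⟨S, hsparse, hwin, hS⟩ := h k hk
  exact ⟨S, hsparse, fun i hi => ⟨ha.trans (hwin i hi).1, (hwin i hi).2.trans hb⟩, hxy ▸ hS⟩

lemma Spells.append (hu : Spells a b x u) (hv : Spells a b y v) (hy : y = x + u.length) :
    Spells a b x (u ++ v) := fun k hk => by
  rw [List.getElem_append]
  split_ifs with hku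
  · exact hu k hku
  · have h := hv (k - u.length) (by grind)
    rwa [hy, Nat.cast_sub (not_lt.1 hku), add_assoc, add_sub_cancel] at h

lemma Spells.insert (h : Spells a b x w) (hj : b + 1 < j ∨ j + 1 < a) :
    Spells (min a j) (max b j) (x + φ ^ j) (w.map Neg.neg) := fun k hk => by
  rw [List.getElem_map, add_right_comm]
  exact (h k (by simpa using hk)).insert hj

lemma Spells.insert_insert {i : ℤ} (h : Spells a b x w) (hi : i + 1 < a) (hj : b + 1 < j)
    (hij : i + 1 < j) :
    Spells (min a i) (max b j) (x + (φ ^ i + φ ^ j)) w := by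
  have h' := (h.insert (.inr hi)).insert (j := j) (.inl (by omega))
  rw [List.map_map, neg_comp_neg, List.map_id, add_assoc] at h'
  exact h'.weaken rfl (by omega) (by omega)

lemma goldenRatio_zpow_neg_even (n : ℕ) : φ ^ (-(2 * n) : ℤ) = ψ ^ (2 * n) := by
  rw [zpow_neg, ← inv_zpow, Real.inv_goldenRatio, ← (even_two_mul n).neg_pow]
  exact_mod_cast zpow_natCast (-ψ) (2 * n)

lemma goldenRatio_zpow_neg_odd (n : ℕ) : φ ^ (-(2 * n + 1) : ℤ) = -ψ ^ (2 * n + 1) := by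
  rw [zpow_neg, ← inv_zpow, Real.inv_goldenRatio, ← (odd_two_mul_add_one n).neg_pow]
  exact_mod_cast zpow_natCast (-ψ) (2 * n + 1)

lemma spells_zero : Spells a b 0 [1] := fun k hk => by
  obtain rfl : k = 0 := by simpa using hk
  exact ⟨∅, by simp⟩

lemma spells_goldenRatio_zpow (j : ℤ) : Spells j j (φ ^ j) [-1] :=
  (spells_zero (a := j + 2) (b := j - 2).insert (j := j) (.inl (by omega))).weaken
    (zero_add _) (by omega) (by omega)

mutual

lemma spells_headWord : ∀ n : ℕ, Spells (-(2 * n)) (2 * n) 0 (headWord n)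
  | 0 => by
    have h₁ : Spells 0 0 1 [-1] := by simpa using spells_goldenRatio_zpow 0
    exact spells_zero.append h₁ (by simp)
  | n + 1 => by
    have hhead := spells_headWord n
    have hmid := (spells_gapWord n).insert_insert (i := -(2 * (n + 1 : ℕ)))
      (j := (2 * n + 1 : ℕ)) (by omega) (by omega) (by omega)
    have htail := hhead.insert_insert (i := -(2 * (n + 1 : ℕ))) (j := (2 * n + 2 : ℕ))
      (by omega) (by omega) (by omega)
    rw [goldenRatio_zpow_neg_even, zpow_natCast] at hmid htail
    have hmid_start : 1 - ψ ^ (2 * n) + (ψ ^ (2 * (n + 1)) + φ ^ (2 * n + 1)) =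
        0 + (headWord n).length := by
      rw [length_headWord]
      linear_combination ψ ^ (2 * n) * Real.goldenConj_sq
    have htail_start : 0 + (ψ ^ (2 * (n + 1)) + φ ^ (2 * n + 2)) =
        0 + (headWord n ++ gapWord n).length := by
      rw [List.length_append, Nat.cast_add, length_headWord, length_gapWord]
      linear_combination ψ ^ (2 * n) * Real.goldenConj_sq + φ ^ (2 * n) * Real.goldenRatio_sq
    refine ((hhead.weaken rfl ?_ ?_).append (hmid.weaken hmid_start ?_ ?_) rfl).append
      (htail.weaken htail_start ?_ ?_) rfl <;> omega

lemma spells_gapWord : ∀ n : ℕ, Spells (1 - 2 * n) (2 * n - 1) (1 - ψ ^ (2 * n)) (gapWord n)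
  | 0 => by simpa [gapWord] using spells_zero (a := 1) (b := -1)
  | 1 => by
    have hfst_start : φ ^ (-1 : ℤ) = 1 - ψ ^ (2 * 1) := by
      rw [zpow_neg_one, Real.inv_goldenRatio]
      linear_combination Real.goldenConj_sq
    have hsnd_start : φ ^ (1 : ℤ) = 1 - ψ ^ (2 * 1) + ([-1] : List ℤˣ).length := by
      rw [zpow_one, List.length_singleton, Nat.cast_one]
      linear_combination Real.goldenConj_sq + Real.goldenRatio_add_goldenConj
    refine ((spells_goldenRatio_zpow (-1)).weaken hfst_start ?_ ?_).append
      ((spells_goldenRatio_zpow 1).weaken hsnd_start ?_ ?_) rfl <;> norm_num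
  | n + 2 => by
    have hgap := spells_gapWord (n + 1)
    have hfst := hgap.insert (j := -(2 * (n + 1 : ℕ) + 1)) (.inr (by omega))
    have hmid := (spells_headWord n).insert_insert (i := -(2 * (n + 1 : ℕ) + 1))
      (j := (2 * n + 2 : ℕ)) (by omega) (by omega) (by omega)
    have hlast := hgap.insert (j := (2 * n + 3 : ℕ)) (.inl (by omega))
    rw [goldenRatio_zpow_neg_odd] at hfst hmid
    rw [zpow_natCast] at hmid hlast
    have hfst_start : 1 - ψ ^ (2 * (n + 1)) + -ψ ^ (2 * (n + 1) + 1) = 1 - ψ ^ (2 * (n + 2)) := by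
      linear_combination ψ ^ (2 * n + 2) * Real.goldenConj_sq
    have hmid_start : 0 + (-ψ ^ (2 * (n + 1) + 1) + φ ^ (2 * n + 2)) =
        1 - ψ ^ (2 * (n + 2)) + ((gapWord (n + 1)).map Neg.neg).length := by
      rw [List.length_map, length_gapWord]
      linear_combination ψ ^ (2 * n + 2) * Real.goldenConj_sq
    have hlast_start : 1 - ψ ^ (2 * (n + 1)) + φ ^ (2 * n + 3) =
        1 - ψ ^ (2 * (n + 2)) + ((gapWord (n + 1)).map Neg.neg ++ headWord n).length := by
      rw [List.length_append, List.length_map, Nat.cast_add, length_gapWord, length_headWord]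
      linear_combination φ ^ (2 * n + 1) * Real.goldenRatio_sq +
        ψ ^ (2 * n + 1) * (ψ + 1) * Real.goldenConj_sq
    refine ((hfst.weaken hfst_start ?_ ?_).append (hmid.weaken hmid_start ?_ ?_) rfl).append
      (hlast.weaken hlast_start ?_ ?_) rfl <;> omega

end

lemma exists_length_headWord_gt (N : ℕ) : ∃ n, N < (headWord n).length := by
  have hφ : 1 < φ ^ 2 := one_lt_pow₀ Real.one_lt_goldenRatio two_ne_zero
  obtain ⟨n, hn⟩ := pow_unbounded_of_one_lt (N : ℝ) hφ
  exact ⟨n, by exact_mod_cast hn.trans_le (goldenRatio_sq_pow_le_length_headWord n)⟩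

lemma exists_isBasePhi (N : ℕ) : ∃ d, IsBasePhi N d := by
  obtain ⟨n, hN⟩ := exists_length_headWord_gt N
  have h := spells_headWord n N hN
  rw [zero_add] at h
  obtain ⟨d, hd, -⟩ := h.exists_isBasePhi
  exact ⟨d, hd⟩

lemma map_range_length_headWord {T : ℕ → ℕ}
    (hT : ∀ N d, IsBasePhi N d → T N = digitSum d % 2) (n : ℕ) :
    (List.range (headWord n).length).map (fun N => (-1) ^ T N) = headWord n := by
  refine List.ext_getElem (by simp) fun N hN hN' => ?_
  have h := spells_headWord n N hN'
  rw [zero_add] at h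
  obtain ⟨d, hd, hsign⟩ := h.exists_isBasePhi
  rw [List.getElem_map, List.getElem_range, hT N d hd, ← Int.units_pow_eq_pow_mod_two, hsign]

end Expansions

section Growth

variable {F : List ℤˣ → ℝ} {A C D K M r : ℝ} {u v : List ℤˣ} {ε : ℕ → ℤˣ}

lemma exists_abs_take_le (F : List ℤˣ → ℝ) (w : List ℤˣ) : ∃ M, ∀ k, |F (w.take k)| ≤ M := by
  refine ⟨∑ i ∈ Finset.range (w.length + 1), |F (w.take i)|, fun k => ?_⟩
  rw [show w.take k = w.take (min k w.length) by simp]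
  exact Finset.single_le_sum (f := fun i => |F (w.take i)|) (fun i _ => abs_nonneg _) (by simp)

lemma abs_take_append_le (hF : ∀ u v, |F (u ++ v)| ≤ |F u| + |F v| + C) (hC : 0 ≤ C)
    (hu : ∀ k, |F (u.take k)| ≤ M) (hv : ∀ k, |F (v.take k)| ≤ M) (k : ℕ) :
    |F ((u ++ v).take k)| ≤ M + |F u| + C := by
  rcases le_total k u.length with hk | hk
  · rw [List.take_append_of_le_length hk]
    linarith [hu k, abs_nonneg (F u)]
  · rw [List.take_append, List.take_of_length_le hk]
    linarith [hF u (v.take (k - u.length)), hv (k - u.length)]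

lemma abs_take_append_append_le (hF : ∀ u v, |F (u ++ v)| ≤ |F u| + |F v| + C) (hC : 0 ≤ C)
    (hu : |F u| ≤ A) (hv : |F v| ≤ A) (hu' : ∀ k, |F (u.take k)| ≤ M)
    (hv' : ∀ k, |F (v.take k)| ≤ M) (k : ℕ) :
    |F ((u ++ v ++ u).take k)| ≤ M + 2 * (A + C) := by
  have htail := abs_take_append_le hF hC hv' hu'
  have h := abs_take_append_le hF hC (fun k => (hu' k).trans ?_) htail k
  · rw [List.append_assoc]
    linarith
  · linarith [abs_nonneg (F v)]

lemma mul_pow_add_le_mul_pow_succ (hr : 2 ≤ r) (hC : 0 ≤ C) (hK : 0 ≤ K)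
    (hD : 2 * (K + C) ≤ D) (n : ℕ) : D * r ^ n + 2 * (K * r ^ n + C) ≤ D * r ^ (n + 1) := by
  have hCr : C ≤ C * r ^ n := le_mul_of_one_le_right hC (one_le_pow₀ (one_le_two.trans hr))
  calc D * r ^ n + 2 * (K * r ^ n + C) ≤ (D + 2 * (K + C)) * r ^ n := by linarith
    _ ≤ D * r * r ^ n := by gcongr; nlinarith
    _ = D * r ^ (n + 1) := by ring

lemma abs_take_words_le (hF : ∀ u v, |F (u ++ v)| ≤ |F u| + |F v| + C) (hC : 0 ≤ C)
    (hneg : ∀ u, |F (u.map Neg.neg)| ≤ |F u|) (hr : 2 ≤ r)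
    (hhead : ∀ n, |F (headWord n)| ≤ K * r ^ n) (hgap : ∀ n, |F (gapWord n)| ≤ K * r ^ n)
    (hD : 2 * (K + C) ≤ D) (hhead₀ : ∀ k, |F ((headWord 0).take k)| ≤ D)
    (hgap₀ : ∀ k, |F ((gapWord 0).take k)| ≤ D) (hgap₁ : ∀ k, |F ((gapWord 1).take k)| ≤ D)
    (n : ℕ) :
    (∀ k, |F ((headWord n).take k)| ≤ D * r ^ n) ∧ (∀ k, |F ((gapWord n).take k)| ≤ D * r ^ n) ∧
      ∀ k, |F ((gapWord (n + 1)).take k)| ≤ D * r ^ (n + 1) := by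
  have hK : 0 ≤ K := by simpa using (abs_nonneg _).trans (hhead 0)
  have hD_nonneg : 0 ≤ D := (abs_nonneg _).trans (hhead₀ 0)
  have hstep := mul_pow_add_le_mul_pow_succ hr hC hK hD
  induction n with
  | zero =>
    have hDr : D ≤ D * r := le_mul_of_one_le_right hD_nonneg (by linarith)
    simp only [pow_zero, mul_one, zero_add, pow_one]
    exact ⟨hhead₀, hgap₀, fun k => (hgap₁ k).trans hDr⟩
  | succ n ih =>
    obtain ⟨ihhead, ihgap, ihgap'⟩ := ih
    have hpow : r ^ n ≤ r ^ (n + 1) := pow_le_pow_right₀ (by linarith) n.le_succ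
    have hhead' : |F (headWord n)| ≤ K * r ^ (n + 1) := (hhead n).trans (by gcongr)
    have ihhead' (k : ℕ) : |F ((headWord n).take k)| ≤ D * r ^ (n + 1) :=
      (ihhead k).trans (by gcongr)
    have ihneg (k : ℕ) : |F (((gapWord (n + 1)).map Neg.neg).take k)| ≤ D * r ^ (n + 1) := by
      rw [← List.map_take]
      exact (hneg _).trans (ihgap' k)
    exact ⟨fun k => (abs_take_append_append_le hF hC (hhead n) (hgap n) ihhead ihgap k).trans
        (hstep n), ihgap',
      fun k => (abs_take_append_append_le hF hC ((hneg _).trans (hgap (n + 1))) hhead' ihneg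
        ihhead' k).trans (hstep (n + 1))⟩

lemma exists_abs_take_headWord_le (hF : ∀ u v, |F (u ++ v)| ≤ |F u| + |F v| + C) (hC : 0 ≤ C)
    (hneg : ∀ u, |F (u.map Neg.neg)| ≤ |F u|) (hr : 2 ≤ r)
    (hhead : ∀ n, |F (headWord n)| ≤ K * r ^ n) (hgap : ∀ n, |F (gapWord n)| ≤ K * r ^ n) :
    ∃ D, ∀ n k, |F ((headWord n).take k)| ≤ D * r ^ n := by
  obtain ⟨M₀, hM₀⟩ := exists_abs_take_le F (headWord 0)
  obtain ⟨M₁, hM₁⟩ := exists_abs_take_le F (gapWord 0)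
  obtain ⟨M₂, hM₂⟩ := exists_abs_take_le F (gapWord 1)
  obtain ⟨D, hD⟩ := Finset.exists_le {M₀, M₁, M₂, 2 * (K + C)}
  simp only [Finset.forall_mem_insert, Finset.mem_singleton, forall_eq] at hD
  obtain ⟨hD₀, hD₁, hD₂, hDKC⟩ := hD
  exact ⟨D, fun n => (abs_take_words_le hF hC hneg hr hhead hgap hDKC
    (fun k => (hM₀ k).trans hD₀) (fun k => (hM₁ k).trans hD₁) (fun k => (hM₂ k).trans hD₂) n).1⟩

lemma isLittleO_natCast_rpow {α : ℝ} (hα : α < 1) :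
    (fun x : ℕ => (x : ℝ) ^ α) =o[atTop] (fun x : ℕ => (x : ℝ)) := by
  refine isLittleO_of_tendsto' ?_ ?_
  · filter_upwards [eventually_ne_atTop 0] with x hx h
    exact absurd h (Nat.cast_ne_zero.2 hx)
  · refine ((tendsto_rpow_neg_atTop (sub_pos.2 hα)).comp tendsto_natCast_atTop_atTop).congr' ?_
    filter_upwards [eventually_ne_atTop 0] with x hx
    rw [Function.comp_apply, neg_sub, Real.rpow_sub_one (Nat.cast_ne_zero.2 hx)]

lemma isLittleO_comp_range (hε : ∀ n, (List.range (headWord n).length).map ε = headWord n)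
    (hF : ∀ u v, |F (u ++ v)| ≤ |F u| + |F v| + C) (hC : 0 ≤ C)
    (hneg : ∀ u, |F (u.map Neg.neg)| ≤ |F u|) (hr : 2 ≤ r) (hrφ : r < φ ^ 2)
    (hhead : ∀ n, |F (headWord n)| ≤ K * r ^ n) (hgap : ∀ n, |F (gapWord n)| ≤ K * r ^ n) :
    (fun x => F ((List.range x).map ε)) =o[atTop] (fun x : ℕ => (x : ℝ)) := by
  obtain ⟨D, hD⟩ := exists_abs_take_headWord_le hF hC hneg hr hhead hgap
  have hφ : 1 < φ ^ 2 := by linarith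
  set α := Real.logb (φ ^ 2) r with hα
  have hα_nonneg : 0 ≤ α := Real.logb_nonneg hφ (by linarith)
  have hα_lt : α < 1 := by
    rwa [hα, Real.logb_lt_iff_lt_rpow hφ (by linarith), Real.rpow_one]
  have hpow (n : ℕ) : r ^ n = ((φ ^ 2) ^ n : ℝ) ^ α := by
    rw [← Real.rpow_pow_comm (by linarith), Real.rpow_logb] <;> linarith
  refine IsBigO.trans_isLittleO (.of_bound (D * r) ?_) (isLittleO_natCast_rpow hα_lt)
  filter_upwards [eventually_ge_atTop 1] with x hx
  obtain ⟨n, hnx, hxn⟩ := exists_nat_pow_near (x := (x : ℝ)) (by exact_mod_cast hx) hφ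
  have hxlen : x ≤ (headWord (n + 1)).length := by
    exact_mod_cast hxn.le.trans (goldenRatio_sq_pow_le_length_headWord (n + 1))
  have hprefix : (headWord (n + 1)).take x = (List.range x).map ε := by
    rw [← hε, ← List.map_take, List.take_range, min_eq_left hxlen]
  have hD_nonneg : 0 ≤ D := by simpa using (abs_nonneg _).trans (hD 0 0)
  calc ‖F ((List.range x).map ε)‖ ≤ D * r ^ (n + 1) := by
        rw [Real.norm_eq_abs, ← hprefix]
        exact hD (n + 1) x
    _ = D * r * ((φ ^ 2) ^ n : ℝ) ^ α := by rw [← hpow]; ring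
    _ ≤ D * r * (x : ℝ) ^ α := by gcongr
    _ ≤ D * r * ‖(x : ℝ) ^ α‖ := by gcongr; exact Real.le_norm_self _

end Growth

section SignSum

/-- The sum of the letters of a word over `{1, -1}`. -/
def signSum (w : List ℤˣ) : ℝ := (w.map fun a : ℤˣ => ((a : ℤ) : ℝ)).sum

lemma signSum_singleton (a : ℤˣ) : signSum [a] = (a : ℤ) := by
  simp only [signSum, List.map_singleton, List.sum_singleton]

lemma signSum_append (u v : List ℤˣ) : signSum (u ++ v) = signSum u + signSum v := by
  simp only [signSum, List.map_append, List.sum_append]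

lemma signSum_map_neg (w : List ℤˣ) : signSum (w.map Neg.neg) = -signSum w := by
  rw [signSum, signSum, List.map_map, List.sum_neg, List.map_map]
  congr 2
  ext a
  simp

lemma signSum_headWord_succ (n : ℕ) :
    signSum (headWord (n + 1)) = 2 * signSum (headWord n) + signSum (gapWord n) := by
  rw [headWord, signSum_append, signSum_append]
  ring

lemma signSum_gapWord_add_two (n : ℕ) :
    signSum (gapWord (n + 2)) = -2 * signSum (gapWord (n + 1)) + signSum (headWord n) := by
  rw [gapWord, signSum_append, signSum_append, signSum_map_neg]
  ring

lemma signSum_headWord_add_three (n : ℕ) :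
    signSum (headWord (n + 3)) = 4 * signSum (headWord (n + 1)) + signSum (headWord n) := by
  linear_combination signSum_headWord_succ (n + 2) + signSum_gapWord_add_two n +
    2 * signSum_headWord_succ (n + 1)

-- `9 / 4` exceeds every root of `X ^ 3 - 4 * X - 1` in absolute value, yet `9 / 4 < φ ^ 2`.
lemma abs_signSum_headWord_le : ∀ n : ℕ, |signSum (headWord n)| ≤ (9 / 4) ^ n
  | 0 => by norm_num [headWord, signSum]
  | 1 => by norm_num [headWord, gapWord, signSum]
  | 2 => by norm_num [headWord, gapWord, signSum]
  | n + 3 => by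
    have h₀ := abs_signSum_headWord_le n
    have h₁ := abs_signSum_headWord_le (n + 1)
    calc |signSum (headWord (n + 3))|
        ≤ 4 * |signSum (headWord (n + 1))| + |signSum (headWord n)| := by
          rw [signSum_headWord_add_three]
          refine (abs_add_le _ _).trans_eq ?_
          rw [abs_mul, abs_of_pos four_pos]
      _ ≤ (4 * (9 / 4) + 1) * (9 / 4) ^ n := by rw [pow_succ] at h₁; linarith
      _ ≤ (9 / 4) ^ 3 * (9 / 4) ^ n := by gcongr; norm_num
      _ = (9 / 4) ^ (n + 3) := by ring

lemma abs_signSum_gapWord_le (n : ℕ) : |signSum (gapWord n)| ≤ 17 / 4 * (9 / 4) ^ n := by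
  have h₀ := abs_le.1 (abs_signSum_headWord_le n)
  have h₁ := abs_le.1 (abs_signSum_headWord_le (n + 1))
  rw [pow_succ, signSum_headWord_succ] at h₁
  exact abs_le.2 ⟨by linarith, by linarith⟩

end SignSum

section PairSum

/-- The sum of the products of consecutive letters of a word over `{1, -1}`. -/
def pairSum : List ℤˣ → ℝ
  | a :: b :: w => (a * b : ℤ) + pairSum (b :: w)
  | _ => 0

variable {u v : List ℤˣ} {a b : ℤˣ}

lemma pairSum_append (ha : u.getLast? = some a) (hb : v.head? = some b) :
    pairSum (u ++ v) = pairSum u + (a * b : ℤ) + pairSum v := by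
  induction u with
  | nil => simp at ha
  | cons c u ih =>
    cases u with
    | nil =>
      obtain ⟨v, rfl⟩ := List.head?_eq_some_iff.1 hb
      obtain rfl : c = a := by simpa using ha
      simp [pairSum]
    | cons d u =>
      have ih := ih (by simpa using ha)
      simp only [List.cons_append, pairSum] at ih ⊢
      rw [ih]
      ring

lemma pairSum_map_neg : ∀ w : List ℤˣ, pairSum (w.map Neg.neg) = pairSum w
  | [] => rfl
  | [_] => rfl
  | a :: b :: w => by
    have ih := pairSum_map_neg (b :: w)
    simp only [List.map_cons, pairSum] at ih ⊢
    rw [ih, Units.val_neg, Units.val_neg, neg_mul_neg]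

lemma abs_pairSum_append_sub_le (u v : List ℤˣ) :
    |pairSum (u ++ v) - pairSum u - pairSum v| ≤ 1 := by
  rcases hu : u.getLast? with _ | a
  · simp [List.getLast?_eq_none_iff.1 hu, pairSum]
  rcases hv : v.head? with _ | b
  · simp [List.head?_eq_none_iff.1 hv, pairSum]
  rw [pairSum_append hu hv, add_sub_right_comm, add_sub_cancel_right, add_sub_cancel_left]
  rcases Int.units_eq_one_or a with rfl | rfl <;> rcases Int.units_eq_one_or b with rfl | rfl <;>
    simp

lemma head?_headWord : ∀ n : ℕ, (headWord n).head? = some 1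
  | 0 => rfl
  | n + 1 => by simp only [headWord, List.head?_append, head?_headWord n, Option.some_or]

lemma getLast?_headWord : ∀ n : ℕ, (headWord n).getLast? = some (-1)
  | 0 => rfl
  | n + 1 => by simp only [headWord, List.getLast?_append, getLast?_headWord n, Option.some_or]

lemma exists_head?_gapWord :
    ∀ n : ℕ, ∃ a, (gapWord n).head? = some a ∧ (gapWord n).getLast? = some a
  | 0 => ⟨1, rfl, rfl⟩
  | 1 => ⟨-1, rfl, rfl⟩
  | n + 2 => by
    obtain ⟨a, hhead, hlast⟩ := exists_head?_gapWord (n + 1)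
    exact ⟨-a, by simp [gapWord, List.head?_append, hhead],
      by simp [gapWord, List.getLast?_append, hlast]⟩

lemma pairSum_headWord_succ (n : ℕ) :
    pairSum (headWord (n + 1)) = 2 * pairSum (headWord n) + pairSum (gapWord n) := by
  obtain ⟨a, hhead, hlast⟩ := exists_head?_gapWord n
  rw [headWord, pairSum_append (a := a) (by simp [hlast]) (head?_headWord n),
    pairSum_append (getLast?_headWord n) hhead]
  push_cast
  ring

lemma pairSum_gapWord_add_two (n : ℕ) :
    pairSum (gapWord (n + 2)) = 2 * pairSum (gapWord (n + 1)) + pairSum (headWord n) := by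
  obtain ⟨a, hhead, hlast⟩ := exists_head?_gapWord (n + 1)
  rw [gapWord, pairSum_append (a := -1) (b := -a) (by simp [getLast?_headWord]) (by simp [hhead]),
    pairSum_append (a := -a) (by simp [hlast]) (head?_headWord n), pairSum_map_neg]
  push_cast
  ring

/-- The deviation of `pairSum` from its expected value, where `2 * √5 / 5 - 1` is the mean product
of consecutive letters of the sign sequence. -/
noncomputable def pairDeviation (w : List ℤˣ) : ℝ := pairSum w - (2 * √5 / 5 - 1) * w.length

lemma abs_pairDeviation_append_le (u v : List ℤˣ) :
    |pairDeviation (u ++ v)| ≤ |pairDeviation u| + |pairDeviation v| + 1 := by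
  have h : pairDeviation (u ++ v) = pairDeviation u + pairDeviation v +
      (pairSum (u ++ v) - pairSum u - pairSum v) := by
    simp only [pairDeviation, List.length_append, Nat.cast_add]
    ring
  rw [h]
  exact (abs_add_le _ _).trans (add_le_add (abs_add_le _ _) (abs_pairSum_append_sub_le u v))

lemma pairDeviation_map_neg (w : List ℤˣ) : pairDeviation (w.map Neg.neg) = pairDeviation w := by
  rw [pairDeviation, pairDeviation, pairSum_map_neg, List.length_map]

lemma goldenConj_sq_eq : ψ ^ 2 = (3 - √5) / 2 := by
  rw [Real.goldenConj_sq, Real.goldenConj]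
  ring

mutual

lemma pairDeviation_headWord : ∀ n : ℕ,
    pairDeviation (headWord n) = (2 - 2 * √5 / 5) * ψ ^ (2 * n) - (1 + 2 * √5 / 5)
  | 0 => by
    simp only [pairDeviation, headWord, pairSum, List.length_cons, List.length_nil]
    push_cast
    ring
  | n + 1 => by
    have hhead := pairDeviation_headWord n
    have hgap := pairDeviation_gapWord n
    have h5 : √5 ^ 2 = 5 := Real.sq_sqrt (by norm_num)
    simp only [pairDeviation, pairSum_headWord_succ] at hhead hgap ⊢
    simp only [headWord, List.length_append, Nat.cast_add]
    linear_combination 2 * hhead + hgap -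
      ψ ^ (2 * n) * ((2 - 2 * √5 / 5) * goldenConj_sq_eq + h5 / 5)

lemma pairDeviation_gapWord : ∀ n : ℕ,
    pairDeviation (gapWord n) = 1 + 2 * √5 / 5 - 4 * √5 / 5 * ψ ^ (2 * n)
  | 0 => by
    simp only [pairDeviation, gapWord, pairSum, List.length_singleton]
    push_cast
    ring
  | 1 => by
    have h5 : √5 ^ 2 = 5 := Real.sq_sqrt (by norm_num)
    simp only [pairDeviation, gapWord, pairSum, List.length_cons, List.length_nil]
    push_cast
    linear_combination 4 * √5 / 5 * goldenConj_sq_eq - 2 / 5 * h5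
  | n + 2 => by
    have hhead := pairDeviation_headWord n
    have hgap := pairDeviation_gapWord (n + 1)
    have h5 : √5 ^ 2 = 5 := Real.sq_sqrt (by norm_num)
    simp only [pairDeviation, pairSum_gapWord_add_two] at hhead hgap ⊢
    simp only [gapWord, List.length_append, List.length_map, Nat.cast_add]
    linear_combination 2 * hgap + hhead + ψ ^ (2 * n) * (√5 / 5 - 2 / 5) * h5 +
      ψ ^ (2 * n) * (4 * √5 / 5 * (ψ ^ 2 + (3 - √5) / 2) - 8 * √5 / 5) * goldenConj_sq_eq

end

lemma abs_pairDeviation_headWord_le (n : ℕ) : |pairDeviation (headWord n)| ≤ 10 := by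
  have h5 : √5 ≤ 3 := Real.sqrt_le_iff.2 (by norm_num)
  obtain ⟨hl, hu⟩ := abs_le.1 (abs_goldenConj_pow_le_one (2 * n))
  rw [pairDeviation_headWord, abs_le]
  constructor <;> nlinarith [Real.sqrt_nonneg 5]

lemma abs_pairDeviation_gapWord_le (n : ℕ) : |pairDeviation (gapWord n)| ≤ 10 := by
  have h5 : √5 ≤ 3 := Real.sqrt_le_iff.2 (by norm_num)
  obtain ⟨hl, hu⟩ := abs_le.1 (abs_goldenConj_pow_le_one (2 * n))
  rw [pairDeviation_gapWord, abs_le]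
  constructor <;> nlinarith [Real.sqrt_nonneg 5]

end PairSum

section Frequencies

variable {ε : ℕ → ℤˣ}

lemma nine_div_four_lt_goldenRatio_sq : 9 / 4 < φ ^ 2 := by
  have h5 : 2 < √5 := Real.lt_sqrt_of_sq_lt (by norm_num)
  rw [Real.goldenRatio_sq, Real.goldenRatio]
  linarith

lemma isLittleO_signSum_range (hε : ∀ n, (List.range (headWord n).length).map ε = headWord n) :
    (fun x => signSum ((List.range x).map ε)) =o[atTop] (fun x : ℕ => (x : ℝ)) := by
  have hhead (n : ℕ) : |signSum (headWord n)| ≤ 17 / 4 * (9 / 4) ^ n :=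
    (abs_signSum_headWord_le n).trans (le_mul_of_one_le_left (by positivity) (by norm_num))
  refine isLittleO_comp_range hε (C := 0) (fun u v => ?_) le_rfl (fun u => ?_) (by norm_num)
    nine_div_four_lt_goldenRatio_sq hhead abs_signSum_gapWord_le
  · rw [signSum_append, add_zero]
    exact abs_add_le _ _
  · rw [signSum_map_neg, abs_neg]

lemma isLittleO_pairDeviation_range
    (hε : ∀ n, (List.range (headWord n).length).map ε = headWord n) :
    (fun x => pairDeviation ((List.range x).map ε)) =o[atTop] (fun x : ℕ => (x : ℝ)) := by
  have hpow (n : ℕ) : (10 : ℝ) ≤ 10 * (9 / 4) ^ n :=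
    le_mul_of_one_le_right (by norm_num) (one_le_pow₀ (by norm_num))
  exact isLittleO_comp_range hε abs_pairDeviation_append_le zero_le_one
    (fun u => (congrArg _ (pairDeviation_map_neg u)).le) (by norm_num)
    nine_div_four_lt_goldenRatio_sq
    (fun n => (abs_pairDeviation_headWord_le n).trans (hpow n))
    (fun n => (abs_pairDeviation_gapWord_le n).trans (hpow n))

lemma signSum_range_succ (ε : ℕ → ℤˣ) (x : ℕ) :
    signSum ((List.range (x + 1)).map ε) = signSum ((List.range x).map ε) + (ε x : ℤ) := by
  rw [List.range_succ, List.map_append, signSum_append, List.map_singleton, signSum_singleton]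

lemma pairSum_range_add_two (ε : ℕ → ℤˣ) (x : ℕ) :
    pairSum ((List.range (x + 2)).map ε) =
      pairSum ((List.range (x + 1)).map ε) + (ε x * ε (x + 1) : ℤ) := by
  rw [List.range_succ, List.map_append, pairSum_append (a := ε x) (b := ε (x + 1))
    (by simp [List.range_succ]) (by simp)]
  simp [pairSum]

lemma four_mul_ite_eq_and_eq (a b η : ℤˣ) :
    4 * (if a = η ∧ b = η then 1 else 0) = 1 + (η : ℤ) * ((a : ℤ) + (b : ℤ)) + (a * b : ℤ) := by
  decide +revert

lemma four_mul_card_filter (ε : ℕ → ℤˣ) (η : ℤˣ) (x : ℕ) :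
    4 * (((Finset.range x).filter fun N => ε N = η ∧ ε (N + 1) = η).card : ℝ) =
      x + (η : ℤ) * (signSum ((List.range x).map ε) + signSum ((List.range (x + 1)).map ε) -
        (ε 0 : ℤ)) + pairSum ((List.range (x + 1)).map ε) := by
  induction x with
  | zero => simp [signSum, pairSum]
  | succ x ih =>
    have hlast := congrArg (Int.cast (R := ℝ)) (four_mul_ite_eq_and_eq (ε x) (ε (x + 1)) η)
    push_cast at hlast
    rw [Finset.card_filter, Nat.cast_sum, Finset.sum_range_succ, ← Nat.cast_sum,
      ← Finset.card_filter, pairSum_range_add_two, signSum_range_succ ε (x + 1)]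
    push_cast
    linear_combination ih + hlast - (η : ℤ) * signSum_range_succ ε x

lemma isLittleO_comp_succ {f : ℕ → ℝ} (hf : f =o[atTop] fun x : ℕ => (x : ℝ)) :
    (fun x => f (x + 1)) =o[atTop] (fun x : ℕ => (x : ℝ)) := by
  refine (hf.comp_tendsto (tendsto_add_atTop_nat 1)).trans_isBigO (.of_bound 2 ?_)
  filter_upwards [eventually_ge_atTop 1] with x hx
  simp only [Function.comp_apply, Real.norm_natCast]
  exact_mod_cast (by omega : x + 1 ≤ 2 * x)

lemma isLittleO_const_natCast (c : ℝ) : (fun _ => c) =o[atTop] (fun x : ℕ => (x : ℝ)) :=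
  (isLittleO_const_id_atTop c).comp_tendsto tendsto_natCast_atTop_atTop

lemma isLittleO_card_filter_sub
    (hε : ∀ n, (List.range (headWord n).length).map ε = headWord n) (η : ℤˣ) :
    (fun x : ℕ => (((Finset.range x).filter fun N => ε N = η ∧ ε (N + 1) = η).card : ℝ) -
      √5 / 10 * x) =o[atTop] (fun x : ℕ => (x : ℝ)) := by
  have hsign := isLittleO_signSum_range hε
  have hsign' := isLittleO_comp_succ hsign
  have hdev' := isLittleO_comp_succ (isLittleO_pairDeviation_range hε)
  have hconst := isLittleO_const_natCast
  have hsum := (((hsign.add hsign').sub (hconst (ε 0 : ℤ))).const_mul_left (η : ℤ)).add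
    (hdev'.add (hconst (2 * √5 / 5 - 1)))
  refine (hsum.const_mul_left (1 / 4)).congr_left fun x => ?_
  simp only [pairDeviation, List.length_map, List.length_range]
  push_cast
  linear_combination -1 / 4 * four_mul_card_filter ε η x

lemma tendsto_card_filter_div
    (hε : ∀ n, (List.range (headWord n).length).map ε = headWord n) (η : ℤˣ) :
    Tendsto (fun x : ℕ =>
      (((Finset.range x).filter fun N => ε N = η ∧ ε (N + 1) = η).card : ℝ) / x)
      atTop (𝓝 (√5 / 10)) := by
  have hlim := (isLittleO_card_filter_sub hε η).tendsto_div_nhds_zero.add_const (√5 / 10)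
  rw [zero_add] at hlim
  refine hlim.congr' ?_
  filter_upwards [eventually_ne_atTop 0] with x hx
  field_simp
  ring

end Frequencies

end BasePhi

/-- The words 00 and 11 each have frequency √5/10 in the sequence `T`. -/
theorem freq_00_11 (T : ℕ → ℕ)
    (hT : ∀ (N : ℕ) (d : ℤ → ℕ), IsBasePhi N d → T N = digitSum d % 2) :
    Filter.Tendsto
      (fun x : ℕ => (((Finset.range x).filter fun N => T N = 0 ∧ T (N + 1) = 0).card : ℝ) / x)
      Filter.atTop (nhds (Real.sqrt 5 / 10)) ∧
    Filter.Tendsto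
      (fun x : ℕ => (((Finset.range x).filter fun N => T N = 1 ∧ T (N + 1) = 1).card : ℝ) / x)
      Filter.atTop (nhds (Real.sqrt 5 / 10)) := by
  have hbit (N : ℕ) : T N = 0 ∨ T N = 1 := by
    obtain ⟨d, hd⟩ := BasePhi.exists_isBasePhi N
    rw [hT N d hd]
    exact Nat.mod_two_eq_zero_or_one _
  have hzero (N : ℕ) : T N = 0 ↔ (-1 : ℤˣ) ^ T N = 1 := by
    rcases hbit N with h | h <;> simp [h]
  have hone (N : ℕ) : T N = 1 ↔ (-1 : ℤˣ) ^ T N = -1 := by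
    rcases hbit N with h | h <;> simp [h]
  have hlim := BasePhi.tendsto_card_filter_div (BasePhi.map_range_length_headWord hT)
  simp only [hzero, hone]
  exact ⟨hlim 1, hlim (-1)⟩
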